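/- Let M be a Coxeter matrix on a finite set S with at least 3 elements such that for all s ≠ t either M s t = 0 or M s t ≥ 6 (XXXL type), and suppose the presentation graph Γ of M is twistless. Then the Artin group A[M] has property R_∞. -/

import Mathlib

/-- Two elements `g h` of a group `G` are `φ`-twisted conjugate if there is `x : G`
with `h = x * g * (φ x)⁻¹`. -/
def TwistedConj {G : Type*} [Group G] (φ : G ≃* G) (g h : G) : Prop :=
  ∃ x : G, h = x * g * (φ x)⁻¹

/-- `R(φ) = ∞`: the set of `φ`-twisted conjugacy classes is infinite. -/
def ReidemeisterInfinite {G : Type*} [Group G] (φ : G ≃* G) : Prop :=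
  Infinite (Quot (TwistedConj φ))

/-- A group `G` has property `R_∞` if `R(φ) = ∞` for every automorphism `φ` of `G`. -/
def PropertyRInfinity (G : Type*) [Group G] : Prop :=
  ∀ φ : G ≃* G, ReidemeisterInfinite φ

/-- `M` is a Coxeter matrix on `S`: symmetric, with `M s s = 1` and `M s t ≠ 1` off the
diagonal (the value `0` encodes the label `∞`). -/
def IsCoxeterMatrix {S : Type*} (M : S → S → ℕ) : Prop :=
  (∀ s t, M s t = M t s) ∧ (∀ s, M s s = 1) ∧ (∀ s t, s ≠ t → M s t ≠ 1)

/-- The alternating word `Π(s,t,m) = s t s t ⋯` of length `m`, as an element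
of the free group. -/
def altWord {S : Type*} (s t : S) (m : ℕ) : FreeGroup S :=
  ((List.range m).map (fun k => if k % 2 = 0 then FreeGroup.of s else FreeGroup.of t)).prod

/-- The Artin relations associated with a Coxeter matrix `M`: for every pair `s ≠ t`
with `M s t = m ≥ 2` the relation `Π(s,t,m) = Π(t,s,m)`; pairs with `M s t = 0`
contribute no relation. -/
def artinRels {S : Type*} (M : S → S → ℕ) : Set (FreeGroup S) :=
  { r | ∃ s t : S, s ≠ t ∧ 2 ≤ M s t ∧
      r = altWord s t (M s t) * (altWord t s (M s t))⁻¹ }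

/-- The Artin group of the Coxeter matrix `M`. -/
abbrev ArtinGroup {S : Type*} (M : S → S → ℕ) : Type _ := PresentedGroup (artinRels M)

/-- The image `t_s` in the Artin group of the standard generator `s`. -/
abbrev artinGen {S : Type*} (M : S → S → ℕ) (s : S) : ArtinGroup M :=
  PresentedGroup.of (rels := artinRels M) s

/-- The presentation graph of a Coxeter matrix `M`: vertices are the elements of `S`,
and `s ≠ t` are adjacent if and only if `M s t ≠ 0`. -/
def presGraph {S : Type*} (M : S → S → ℕ) : SimpleGraph S :=
  SimpleGraph.fromRel (fun s t => M s t ≠ 0)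

/-- A graph is twistless if it is connected, has no cut-vertex (removing any single
vertex leaves a connected graph) and no separating edge (removing the two endpoints of
any edge, together with all incident edges, leaves a connected graph). -/
def Twistless {V : Type*} (G : SimpleGraph V) : Prop :=
  G.Connected ∧
  (∀ v : V, (G.induce {u : V | u ≠ v}).Connected) ∧
  (∀ s t : V, G.Adj s t → (G.induce {u : V | u ≠ s ∧ u ≠ t}).Connected)

/-!
A homomorphism of a group `H` onto a finite nonabelian simple group `P`, together with its
translates by an automorphism `φ` of `H`, maps `H` onto a power of `P` in which `φ` permutes the
factors cyclically. The product along the cycle carries `φ`-twisted conjugacy classes of `H` to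
twisted conjugacy classes of `P`. If `P = Alt(q)` with `q ≥ 5` prime, there are at least two of
these: otherwise some automorphism of `P` would be fixed-point-free and would preserve a cyclic
Sylow `q`-subgroup, which would then be central in its normalizer, and Burnside's transfer theorem
would contradict simplicity. Quotients `Alt(q)` for infinitely many `q` are jointly surjective, so
`n` of them separate at least `2 ^ n` classes, and `H` has property `R_∞`. This passes from a
characteristic subgroup of finite index to the whole group.

To find such a subgroup of an Artin group, let `r` send the generators to involutions of a finite
quotient `Q` of the Coxeter group. An element of the Artin group is a gallery in `Q`. If every wall
is decorated by an element of a group `F`, recording the decorations that a gallery meets defines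
a homomorphism to `F ≀ᵣ Q`, provided that the walls met in one braid relation have commuting
decorations. When the product of the reflections `r_a` and `r_b r_c r_b` has large order in `Q`,
their walls never meet in a braid relation, so they may be decorated by two `q`-cycles generating
`Alt(q)`, and the intersection of the kernels of all maps to `Q` surjects onto `Alt(q)`.

Under the Tits representation `r_a` and `r_b r_c r_b` are reflections in two roots `x` and `y` with
`⟨xᵛ, y⟩ ⟨yᵛ, x⟩ ≥ 4`, so their product has infinite order. The representation is defined over the
ring `ℤ[2 cos (π / M s t)]`, which is finite over `ℤ`, so its image is residually finite and a
suitable `Q` exists.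
-/

/-! ### Twisted conjugacy classes -/

section TwistedConjugacy

variable {G H : Type*} [Group G] [Group H]

theorem twistedConj_equivalence (φ : G ≃* G) : Equivalence (TwistedConj φ) where
  refl g := ⟨1, by simp⟩
  symm := by
    rintro g _ ⟨x, rfl⟩
    exact ⟨x⁻¹, by simp [mul_assoc]⟩
  trans := by
    rintro g _ _ ⟨x, rfl⟩ ⟨y, rfl⟩
    exact ⟨y * x, by simp [mul_assoc]⟩

theorem TwistedConj.map {φ : G ≃* G} {ψ : H ≃* H} {f : G →* H} (hf : ∀ x, f (φ x) = ψ (f x))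
    {g h : G} (hgh : TwistedConj φ g h) : TwistedConj ψ (f g) (f h) := by
  obtain ⟨x, rfl⟩ := hgh
  exact ⟨f x, by simp [hf]⟩

/-- The twisted norm `x * φ x * ⋯ * φ^(n-1) x`. It turns `φ`-twisted conjugacy into
`φ^n`-twisted conjugacy. -/
def twistedNorm (φ : MulAut G) (n : ℕ) (x : G) : G :=
  ((List.range n).map fun j => (φ ^ j) x).prod

theorem twistedNorm_succ (φ : MulAut G) (n : ℕ) (x : G) :
    twistedNorm φ (n + 1) x = twistedNorm φ n x * (φ ^ n) x := by
  simp [twistedNorm, List.range_succ]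

theorem twistedNorm_conj (φ : MulAut G) (n : ℕ) (x z : G) :
    twistedNorm φ n (z * x * (φ z)⁻¹) = z * twistedNorm φ n x * ((φ ^ n) z)⁻¹ := by
  induction n with
  | zero => simp [twistedNorm]
  | succ n ih =>
    rw [twistedNorm_succ, twistedNorm_succ, ih]
    simp [pow_succ, mul_assoc]

theorem TwistedConj.twistedNorm {φ : MulAut G} (n : ℕ) {x y : G} (h : TwistedConj φ x y) :
    TwistedConj (φ ^ n) (twistedNorm φ n x) (twistedNorm φ n y) := by
  obtain ⟨z, rfl⟩ := h
  exact ⟨z, twistedNorm_conj φ n x z⟩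

theorem map_twistedNorm_of_map_pow_eq_one (φ : MulAut G) (f : G →* H) {n : ℕ} (hn : 0 < n) {x : G}
    (hx : ∀ j, 0 < j → j < n → f ((φ ^ j) x) = 1) : f (twistedNorm φ n x) = f x := by
  induction n, hn using Nat.le_induction with
  | base => simp [_root_.twistedNorm]
  | succ n hn ih =>
    rw [twistedNorm_succ, map_mul, ih fun j hj hjn => hx j hj (by omega), hx n hn (by omega),
      mul_one]

theorem reidemeisterInfinite_of_subgroup (K : Subgroup G) [K.FiniteIndex] {φ : G ≃* G}
    {ψ : K ≃* K} (hψ : ∀ x : K, φ x = ψ x) (h : ReidemeisterInfinite ψ) :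
    ReidemeisterInfinite φ := by
  have : Infinite (Quot (TwistedConj ψ)) := h
  refine not_finite_iff_infinite.mp fun _ : Finite (Quot (TwistedConj φ)) => ?_
  have hrep (k : K) : TwistedConj φ (Quot.mk (TwistedConj φ) (k : G)).out k :=
    ((twistedConj_equivalence φ).quot_mk_eq_iff _ _).mp (Quot.out_eq _)
  choose x hx using hrep
  have hconj {k l : K} (hkl : (Quot.mk (TwistedConj φ) (k : G)) = Quot.mk _ (l : G))
      (hcoset : QuotientGroup.mk (s := K) (x k)⁻¹ = QuotientGroup.mk (x l)⁻¹) :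
      TwistedConj ψ k l := by
    have hz : x k * (x l)⁻¹ ∈ K := by simpa using QuotientGroup.eq.mp hcoset
    refine (twistedConj_equivalence ψ).symm ⟨⟨_, hz⟩, Subtype.ext ?_⟩
    have hk := hx k
    rw [hkl] at hk
    calc (k : G) = (x k * (x l)⁻¹) * (x l * (Quot.mk (TwistedConj φ) (l : G)).out * (φ (x l))⁻¹) *
          (φ (x k * (x l)⁻¹))⁻¹ := by simpa [mul_assoc] using hk
      _ = (x k * (x l)⁻¹) * l * (φ (x k * (x l)⁻¹))⁻¹ := by rw [← hx l]
      _ = _ := by simp [← hψ]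
  refine Infinite.not_finite (α := Quot (TwistedConj ψ)) (Finite.of_injective
    (fun d : Quot (TwistedConj ψ) =>
      (Quot.mk (TwistedConj φ) (d.out : G), QuotientGroup.mk (s := K) (x d.out)⁻¹))
    fun d e hde => ?_)
  rw [← d.out_eq, ← e.out_eq]
  exact Quot.sound (hconj (congrArg Prod.fst hde) (congrArg Prod.snd hde))

theorem PropertyRInfinity.of_characteristic (K : Subgroup G) [K.Characteristic] [K.FiniteIndex]
    (h : PropertyRInfinity K) : PropertyRInfinity G := by
  intro φ
  let ψ : K ≃* K := (φ.subgroupMap K).trans <|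
    MulEquiv.subgroupCongr (Subgroup.characteristic_iff_map_eq.mp inferInstance φ)
  exact reidemeisterInfinite_of_subgroup K (ψ := ψ) (fun _ => rfl) (h ψ)

end TwistedConjugacy

/-! ### Fixed-point-free automorphisms -/

section FixedPointFree

open MonoidHom Pointwise

variable {P : Type*} [Group P] [Finite P] {α : MulAut P}

theorem fixedPointFree_of_forall_twistedConj_one (h : ∀ g, TwistedConj α 1 g) :
    FixedPointFree α := by
  have hsurj : Function.Surjective fun x : P => x * (α x)⁻¹ := fun g =>
    (h g).imp fun x hx => by simpa using hx.symm
  intro x hx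
  exact Finite.injective_iff_surjective.mpr hsurj (by simp [hx])

theorem mem_of_div_apply_mem (hα : FixedPointFree α) {K : Subgroup P}
    (hK : ∀ k ∈ K, α k ∈ K) {n : P} (hn : n / α n ∈ K) : n ∈ K := by
  have hmaps : Set.MapsTo (commutatorMap α) K K := fun k hk => K.div_mem hk (hK k hk)
  obtain ⟨⟨c, hc⟩, hcn⟩ := Finite.surjective_of_injective
    (hmaps.restrict_inj.mpr hα.commutatorMap_injective.injOn) ⟨_, hn⟩
  have : c = n := hα.commutatorMap_injective (congrArg Subtype.val hcn)
  exact this ▸ hc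

theorem exists_sylow_smul_eq (hα : FixedPointFree α) (q : ℕ) [Fact q.Prime] :
    ∃ T : Sylow q P, α • T = T := by
  let T₀ : Sylow q P := default
  obtain ⟨g, hg⟩ := MulAction.exists_smul_eq P T₀ (α • T₀)
  obtain ⟨y, hy⟩ := hα.commutatorMap_surjective g⁻¹
  refine ⟨y⁻¹ • T₀, ?_⟩
  have hαy : α y⁻¹ * g = y⁻¹ := by
    rw [← inv_inv g, ← hy]
    simp [div_eq_mul_inv]
  calc α • y⁻¹ • T₀ = MulAut.conj (α y⁻¹) • α • T₀ := by
        rw [Sylow.smul_def, smul_smul, smul_smul]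
        congr 1
        ext
        simp
    _ = y⁻¹ • T₀ := by rw [← hg, ← Sylow.smul_def, smul_smul, hαy]

theorem normalizer_le_centralizer_of_smul_eq (hα : FixedPointFree α) {T : Subgroup P} [IsCyclic T]
    (hT : α • T = T) : Subgroup.normalizer (T : Set P) ≤ Subgroup.centralizer T := by
  have hαT : ∀ {t}, t ∈ T → ∃ s ∈ T, α s = t := fun ht => by rwa [← hT] at ht
  have hC : ∀ c ∈ Subgroup.centralizer (T : Set P), α c ∈ Subgroup.centralizer (T : Set P) := by
    intro c hc t ht
    obtain ⟨s, hs, rfl⟩ := hαT ht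
    rw [← map_mul, ← map_mul, hc s hs]
  intro n hn
  -- As automorphisms of `T` are power maps, `n` and `α n` act on `T` by the same exponent.
  obtain ⟨e, he⟩ := map_cyclic (T.normalizerMonoidHom ⟨n, hn⟩).toMonoidHom
  have hpow : ∀ t ∈ T, n * t * n⁻¹ = t ^ e := fun t ht => congrArg Subtype.val (he ⟨t, ht⟩)
  have hαpow : ∀ t ∈ T, α n * t * (α n)⁻¹ = t ^ e := by
    intro t ht
    obtain ⟨s, hs, rfl⟩ := hαT ht
    simp only [← map_mul, ← map_inv, hpow s hs, map_zpow]
  refine inv_mem_iff.mp (mem_of_div_apply_mem hα hC fun t ht => ?_)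
  have hconj : n * t * n⁻¹ = α n * t * (α n)⁻¹ := (hpow t ht).trans (hαpow t ht).symm
  simpa [div_eq_mul_inv, mul_assoc] using congrArg (n⁻¹ * · * α n) hconj

theorem exists_not_twistedConj_one [IsSimpleGroup P] [Group.IsPerfect P] {q : ℕ}
    [Fact q.Prime] (hq : q ∣ Nat.card P) (hcyc : ∀ T : Sylow q P, IsCyclic T) (α : MulAut P) :
    ∃ g, ¬ TwistedConj α 1 g := by
  by_contra! h
  have hα := fixedPointFree_of_forall_twistedConj_one h
  obtain ⟨T, hT⟩ := exists_sylow_smul_eq hα q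
  have := hcyc T
  have hcompl := ker_transferSylow_isComplement' T
    (normalizer_le_centralizer_of_smul_eq hα (congrArg Sylow.toSubgroup hT))
  obtain hker | hker := (inferInstance : (transferSylow T _).ker.Normal).eq_bot_or_eq_top
  · have hT_top : (T : Subgroup P) = ⊤ := by
      rw [hker] at hcompl
      simpa using hcompl
    have hT_comm := (T : Subgroup P).le_centralizer
    rw [hT_top, Subgroup.coe_top, Subgroup.centralizer_univ, top_le_iff,
      ← commutator_eq_bot_iff_center_eq_top, Group.IsPerfect.commutator_eq_top] at hT_comm
    exact top_ne_bot hT_comm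
  · rw [hker] at hcompl
    exact T.ne_bot_of_dvd_card hq (by simpa using hcompl)

end FixedPointFree

/-! ### Infinitely many simple quotients -/

section PerfectQuotients

variable {H P : Type*} [Group H] [Group P]

theorem map_inf_eq_top [Group.IsPerfect P] {f : H →* P} {A B : Subgroup H} [A.Normal] [B.Normal]
    (hA : A.map f = ⊤) (hB : B.map f = ⊤) : (A ⊓ B).map f = ⊤ := by
  rw [eq_top_iff, ← Group.IsPerfect.commutator_eq_top (G := P), commutator_def, ← hA]
  nth_rewrite 2 [hA]
  rw [← hB, ← Subgroup.map_commutator]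
  exact Subgroup.map_mono (Subgroup.commutator_le_inf A B)

theorem ker_map_eq_top_of_ker_ne {Q : Type*} [Group Q] [IsSimpleGroup P] [IsSimpleGroup Q]
    {f : H →* P} {g : H →* Q} (hf : Function.Surjective f) (hg : Function.Surjective g)
    (hfg : f.ker ≠ g.ker) : f.ker.map g = ⊤ := by
  refine (f.normal_ker.map g hg).eq_bot_or_eq_top.resolve_left fun hbot => ?_
  have hle : f.ker ≤ g.ker := (Subgroup.map_eq_bot_iff _).mp hbot
  obtain h | h := (g.normal_ker.map f hf).eq_bot_or_eq_top
  · exact hfg (hle.antisymm ((Subgroup.map_eq_bot_iff _).mp h))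
  · have hker_top : g.ker = ⊤ := by
      rw [← sup_eq_left.mpr hle, ← Subgroup.comap_map_eq, h, Subgroup.comap_top]
    rw [← MonoidHom.range_eq_top, MonoidHom.ker_eq_top_iff.mp hker_top, MonoidHom.range_one] at hg
    exact bot_ne_top hg

theorem exists_forall_mem_map_eq {ι : Type*} {P : ι → Type*} [∀ i, Group (P i)]
    [∀ i, IsSimpleGroup (P i)] [∀ i, Group.IsPerfect (P i)] {f : ∀ i, H →* P i}
    (hf : ∀ i, Function.Surjective (f i)) (hker : Function.Injective fun i => (f i).ker)
    (t : Finset ι) (p : ∀ i, P i) : ∃ x, ∀ i ∈ t, f i x = p i := by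
  classical
  have hnormal (t : Finset ι) : (⨅ i ∈ t, (f i).ker).Normal :=
    Subgroup.normal_iInf_normal fun i => Subgroup.normal_iInf_normal fun _ => inferInstance
  have hmap (j : ι) (t : Finset ι) (hj : j ∉ t) : (⨅ i ∈ t, (f i).ker).map (f j) = ⊤ := by
    induction t using Finset.induction_on with
    | empty => simpa [← MonoidHom.range_eq_map, MonoidHom.range_eq_top] using hf j
    | insert i t _ ih =>
      rw [Finset.mem_insert, not_or] at hj
      rw [Finset.iInf_insert]
      exact map_inf_eq_top (ker_map_eq_top_of_ker_ne (hf i) (hf j) (hker.ne (Ne.symm hj.1)))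
        (ih hj.2)
  induction t using Finset.induction_on with
  | empty => exact ⟨1, by simp⟩
  | insert j t hj ih =>
    obtain ⟨x, hx⟩ := ih
    obtain ⟨k, hk, hkj⟩ : (f j x)⁻¹ * p j ∈ (⨅ i ∈ t, (f i).ker).map (f j) := by
      rw [hmap j t hj]
      exact Subgroup.mem_top _
    simp only [SetLike.mem_coe, Subgroup.mem_iInf, MonoidHom.mem_ker] at hk
    refine ⟨x * k, fun i hi => ?_⟩
    obtain rfl | hi := Finset.mem_insert.mp hi
    · simp [hkj]
    · simp [hk i hi, hx i hi]

end PerfectQuotients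

section SimpleQuotients

open Function

variable {H P : Type*} [Group H] [Group P]

theorem finite_monoidHom [Group.FG H] [Finite P] : Finite (H →* P) := by
  obtain ⟨t, ht⟩ := Group.fg_def.mp ‹Group.FG H›
  refine Finite.of_injective (fun (f : H →* P) (x : t) => f x) fun f g hfg => ?_
  exact MonoidHom.eq_of_eqOn_dense ht fun x hx => congrFun hfg ⟨x, hx⟩

theorem iterate_comap_ker (φ : MulAut H) (ρ : H →* P) (n : ℕ) :
    (Subgroup.comap φ.toMonoidHom)^[n] ρ.ker = (ρ.comp (φ ^ n).toMonoidHom).ker := by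
  induction n with
  | zero => rfl
  | succ n ih =>
    rw [iterate_succ_apply', ih, MonoidHom.comap_ker, pow_succ]
    rfl

/-- The period of the kernel of `ρ` under precomposition of `ρ` with powers of `φ`. -/
noncomputable def kerPeriod (φ : MulAut H) (ρ : H →* P) : ℕ :=
  minimalPeriod (Subgroup.comap φ.toMonoidHom) ρ.ker

theorem kerPeriod_pos [Group.FG H] [Finite P] (φ : MulAut H) (ρ : H →* P) :
    0 < kerPeriod φ ρ := by
  have := finite_monoidHom (H := H) (P := P)
  have hinj : Injective fun f : H →* P => f.comp φ.toMonoidHom := fun f g =>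
    (MonoidHom.cancel_right φ.surjective).mp
  obtain ⟨n, hn, hρ⟩ := hinj.mem_periodicPts ρ
  exact (hρ.map fun f => (f.comap_ker _).symm).minimalPeriod_pos hn

theorem ker_comp_pow_kerPeriod (φ : MulAut H) (ρ : H →* P) :
    (ρ.comp (φ ^ kerPeriod φ ρ).toMonoidHom).ker = ρ.ker := by
  rw [← iterate_comap_ker]
  exact isPeriodicPt_minimalPeriod _ _

theorem injOn_ker_comp_pow (φ : MulAut H) (ρ : H →* P) :
    (Set.Iio (kerPeriod φ ρ)).InjOn fun j => (ρ.comp (φ ^ j).toMonoidHom).ker := by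
  simp only [← iterate_comap_ker]
  exact iterate_injOn_Iio_minimalPeriod

theorem exists_mulEquiv_apply_eq_of_ker_eq {Q : Type*} [Group Q] {f : H →* P} {g : H →* Q}
    (hf : Surjective f) (hg : Surjective g) (hfg : f.ker = g.ker) :
    ∃ α : P ≃* Q, ∀ x, α (f x) = g x := by
  refine ⟨(QuotientGroup.quotientKerEquivOfSurjective f hf).symm.trans <|
    (QuotientGroup.quotientMulEquivOfEq hfg).trans <|
      QuotientGroup.quotientKerEquivOfSurjective g hg, fun x => ?_⟩
  have : (QuotientGroup.quotientKerEquivOfSurjective f hf).symm (f x) = (x : H ⧸ f.ker) := by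
    rw [MulEquiv.symm_apply_eq]
    rfl
  rw [MulEquiv.trans_apply, this]
  rfl

variable [Group.FG H] {ι : Type*} {P : ι → Type*} [∀ i, Group (P i)] [∀ i, Finite (P i)]
  [∀ i, IsSimpleGroup (P i)] [∀ i, Group.IsPerfect (P i)] {ρ : ∀ i, H →* P i}

theorem exists_twistedNorm_eq (hcard : Injective fun i => Nat.card (P i))
    (hρ : ∀ i, Surjective (ρ i)) (φ : MulAut H) (t : Finset ι) (p : ∀ i, P i) :
    ∃ x, ∀ i ∈ t, ρ i (twistedNorm φ (kerPeriod φ (ρ i)) x) = p i := by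
  classical
  let n (i : ι) : ℕ := kerPeriod φ (ρ i)
  let f (a : Σ i, Fin (n i)) : H →* P a.1 := (ρ a.1).comp (φ ^ (a.2 : ℕ)).toMonoidHom
  have hf (a) : Surjective (f a) := (hρ a.1).comp (φ ^ (a.2 : ℕ)).surjective
  have hker : Injective fun a => (f a).ker := by
    rintro ⟨i, j⟩ ⟨i', j'⟩ h
    have hindex (a) : (f a).ker.index = Nat.card (P a.1) := by
      rw [Subgroup.index_ker, MonoidHom.range_eq_top.mpr (hf a), Subgroup.card_top]
    obtain rfl : i = i' := hcard <| by
      simpa only [hindex] using congrArg Subgroup.index h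
    obtain rfl : j = j' := Fin.ext (injOn_ker_comp_pow φ (ρ i) j.2 j'.2 h)
    rfl
  obtain ⟨x, hx⟩ := exists_forall_mem_map_eq hf hker (t.sigma fun _ => Finset.univ)
    fun a => if (a.2 : ℕ) = 0 then p a.1 else 1
  refine ⟨x, fun i hi => ?_⟩
  have hx' (j : ℕ) (hj : j < n i) : ρ i ((φ ^ j) x) = if j = 0 then p i else 1 :=
    hx ⟨i, j, hj⟩ (by simp [hi])
  rw [map_twistedNorm_of_map_pow_eq_one φ (ρ i) (kerPeriod_pos φ (ρ i))
    fun j hj hjn => (hx' j hjn).trans (if_neg hj.ne')]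
  simpa using hx' 0 (kerPeriod_pos φ (ρ i))

theorem propertyRInfinity_of_simple_quotients [Infinite ι]
    (hcard : Injective fun i => Nat.card (P i))
    (hP : ∀ i (α : MulAut (P i)), ∃ g, ¬ TwistedConj α 1 g)
    (hρ : ∀ i, Surjective (ρ i)) : PropertyRInfinity H := by
  intro φ
  let n (i : ι) : ℕ := kerPeriod φ (ρ i)
  have hα (i : ι) : ∃ α : MulAut (P i), ∀ x, α (ρ i x) = ρ i ((φ ^ n i : MulAut H) x) := by
    refine exists_mulEquiv_apply_eq_of_ker_eq (g := (ρ i).comp (φ ^ n i : MulAut H).toMonoidHom)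
      (hρ i) ((hρ i).comp (φ ^ n i : MulAut H).surjective) (ker_comp_pow_kerPeriod φ (ρ i)).symm
  choose α hα using hα
  choose g hg using fun i => hP i (α i)
  let cls (x : H) (i : ι) : Prop := TwistedConj (α i) 1 (ρ i (twistedNorm φ (n i) x))
  have hcls {x y : H} (hxy : TwistedConj φ x y) : cls x = cls y := by
    funext i
    have hxy' := (hxy.twistedNorm (n i)).map fun z => (hα i z).symm
    have hequiv := twistedConj_equivalence (α i)
    exact propext ⟨fun hx => hequiv.trans hx hxy', fun hy => hequiv.trans hy (hequiv.symm hxy')⟩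
  refine not_finite_iff_infinite.mp fun _ : Finite (Quot (TwistedConj φ)) => ?_
  obtain ⟨t, ht⟩ := Infinite.exists_subset_card_eq ι (Nat.card (Quot (TwistedConj φ)))
  have hsurj : Surjective fun (c : Quot (TwistedConj φ)) (i : t) =>
      c.lift cls (fun _ _ => hcls) i := by
    classical
    intro T
    obtain ⟨x, hx⟩ := exists_twistedNorm_eq hcard hρ φ t fun i =>
      if ∃ h : i ∈ t, T ⟨i, h⟩ then 1 else g i
    refine ⟨Quot.mk _ x, funext fun ⟨i, hi⟩ => ?_⟩
    change TwistedConj (α i) 1 (ρ i (twistedNorm φ (kerPeriod φ (ρ i)) x)) = _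
    rw [hx i hi]
    by_cases hT : T ⟨i, hi⟩
    · simp [hi, hT, (twistedConj_equivalence (α i)).refl]
    · simp [hT, hg]
  have hle := Nat.card_le_card_of_surjective _ hsurj
  rw [Nat.card_fun, Nat.card_eq_fintype_card, Fintype.card_prop, Nat.card_eq_fintype_card,
    Fintype.card_coe, ht] at hle
  exact absurd hle Nat.lt_two_pow_self.not_ge

end SimpleQuotients

/-! ### Alternating groups of prime degree -/

section AlternatingGroup

open Equiv Equiv.Perm

theorem isThreeCycle_mul_swap_mul_inv_mul_swap {Ω : Type*} [Fintype Ω] [DecidableEq Ω]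
    {x : Perm Ω} {i : Ω} (h₁ : x i ≠ i) (h₂ : x (x i) ≠ i) :
    (x * swap i (x i) * x⁻¹ * swap i (x i)).IsThreeCycle := by
  have : x * swap i (x i) * x⁻¹ = swap (x i) (x (x i)) := by
    rw [swap_apply_apply]
  rw [this, swap_comm i]
  exact isThreeCycle_swap_mul_swap_same (x.injective.ne h₁.symm) h₁ h₂

theorem alternatingGroup_le_of_isCycle_mem {Ω : Type*} [Fintype Ω] [DecidableEq Ω]
    (hΩ : (Nat.card Ω).Prime) (hcard : 3 ≤ Nat.card Ω) {x : Perm Ω} (hx : x.IsCycle)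
    (hsupp : x.support = Finset.univ) {N : Subgroup (Perm Ω)} (hxN : x ∈ N) (i : Ω)
    (hconj : swap i (x i) * x * swap i (x i) ∈ N) : alternatingGroup Ω ≤ N := by
  have hmove (j : Ω) : x j ≠ j := by simp [← mem_support, hsupp]
  have hmove₂ : x (x i) ≠ i := fun h => by
    have : x ^ 2 = 1 := hx.pow_eq_one_iff.mpr ⟨i, hmove i, h⟩
    have := Nat.le_of_dvd two_pos (orderOf_dvd_of_pow_eq_one this)
    rw [hx.orderOf, hsupp, Finset.card_univ, ← Nat.card_eq_fintype_card] at this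
    omega
  have : MulAction.IsPretransitive N Ω := ⟨fun j k => by
    obtain ⟨n, hn⟩ := hx.exists_zpow_eq (hmove j) (hmove k)
    exact ⟨⟨_, N.zpow_mem hxN n⟩, hn⟩⟩
  refine alternatingGroup_le_of_isPreprimitive_of_isThreeCycle_mem (.of_prime_card hΩ)
    (isThreeCycle_mul_swap_mul_inv_mul_swap (hmove i) hmove₂) ?_
  simpa [mul_assoc] using N.mul_mem hxN (N.inv_mem hconj)

variable {q : ℕ}

theorem exists_orderOf_eq_closure_pair_eq_top (hq : q.Prime) (h3 : 3 ≤ q) :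
    ∃ x y : alternatingGroup (Fin q), orderOf x = q ∧ orderOf y = q ∧
      Subgroup.closure {x, y} = ⊤ := by
  have hcycle : (finRotate q).IsCycle := isCycle_finRotate_of_le (by omega)
  have hsupp : (finRotate q).support = Finset.univ := support_finRotate_of_le (by omega)
  let i : Fin q := ⟨0, by omega⟩
  let s : Perm (Fin q) := swap i (finRotate q i)
  have hx : finRotate q ∈ alternatingGroup (Fin q) := by
    rw [mem_alternatingGroup, sign_finRotate]
    exact (Nat.Odd.sub_odd (hq.odd_of_ne_two (by omega)) odd_one).neg_one_pow
  have hy : s * finRotate q * s⁻¹ ∈ alternatingGroup (Fin q) :=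
    alternatingGroup.normal.conj_mem _ hx s
  have horder : orderOf (finRotate q) = q := by
    rw [hcycle.orderOf, hsupp, Finset.card_univ, Fintype.card_fin]
  refine ⟨⟨_, hx⟩, ⟨_, hy⟩, ?_, ?_, ?_⟩
  · rwa [Subgroup.orderOf_mk]
  · rw [Subgroup.orderOf_mk, ← MulAut.conj_apply, MulEquiv.orderOf_eq, horder]
  · rw [← Subgroup.map_injective (alternatingGroup (Fin q)).subtype_injective |>.eq_iff,
      ← MonoidHom.range_eq_map, Subgroup.range_subtype]
    refine le_antisymm (Subgroup.map_subtype_le _) ?_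
    refine alternatingGroup_le_of_isCycle_mem (by simpa) (by simpa) hcycle hsupp ?_ i ?_
    · exact ⟨_, Subgroup.subset_closure (Set.mem_insert _ _), rfl⟩
    · exact ⟨_, Subgroup.subset_closure (Set.mem_insert_of_mem _ rfl), rfl⟩

theorem two_mul_card_alternatingGroup_fin (hq : 2 ≤ q) :
    2 * Nat.card (alternatingGroup (Fin q)) = q.factorial := by
  have := Fin.nontrivial_iff_two_le.mpr hq
  rw [two_mul_nat_card_alternatingGroup, Nat.card_perm, Nat.card_fin]

theorem factorization_card_alternatingGroup_self (hq : q.Prime) (h3 : 3 ≤ q) :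
    (Nat.card (alternatingGroup (Fin q))).factorization q = 1 := by
  have hfact : (Nat.factorial q).factorization q = 1 := by
    rw [← Nat.mul_factorial_pred hq.ne_zero,
      Nat.factorization_mul hq.ne_zero (Nat.factorial_ne_zero _), Finsupp.add_apply,
      hq.factorization_self, Nat.factorization_eq_zero_of_not_dvd]
    rw [hq.dvd_factorial]
    omega
  have htwo : (2 : ℕ).factorization q = 0 :=
    Nat.factorization_eq_zero_of_not_dvd fun h => by have := Nat.le_of_dvd two_pos h; omega
  rwa [← two_mul_card_alternatingGroup_fin hq.two_le,
    Nat.factorization_mul two_ne_zero Nat.card_pos.ne', Finsupp.add_apply, htwo, zero_add] at hfact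

theorem alternatingGroup_exists_not_twistedConj_one (hq : q.Prime) (h5 : 5 ≤ q)
    (α : MulAut (alternatingGroup (Fin q))) : ∃ g, ¬ TwistedConj α 1 g := by
  have : Fact q.Prime := ⟨hq⟩
  have := alternatingGroup.isSimpleGroup (α := Fin q) (by simpa)
  have : Group.IsPerfect (alternatingGroup (Fin q)) :=
    ⟨commutator_alternatingGroup_eq_top (by simpa)⟩
  have hfact := factorization_card_alternatingGroup_self hq (by omega)
  refine exists_not_twistedConj_one (q := q) (Nat.dvd_of_factorization_pos (by omega))
    (fun T => isCyclic_of_prime_card (p := q) ?_) α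
  rw [T.card_eq_multiplicity, hfact, pow_one]

theorem propertyRInfinity_of_alternatingGroup_quotients {H : Type*} [Group H] [Group.FG H] (k : ℕ)
    (h : ∀ q, q.Prime → k < q → ∃ f : H →* alternatingGroup (Fin q), Function.Surjective f) :
    PropertyRInfinity H := by
  let ι := {q : ℕ // q.Prime ∧ max k 5 < q}
  have : Infinite ι := Set.infinite_coe_iff.mpr <| Set.infinite_of_forall_exists_gt fun n => by
    obtain ⟨q, hnq, hq⟩ := Nat.exists_infinite_primes (max n (max k 5) + 1)
    exact ⟨q, ⟨hq, by omega⟩, by omega⟩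
  have h5 (q : ι) : 5 ≤ (q : ℕ) := by have := q.2.2; omega
  have (q : ι) := alternatingGroup.isSimpleGroup (α := Fin q) (by simpa using h5 q)
  have (q : ι) : Group.IsPerfect (alternatingGroup (Fin q)) :=
    ⟨commutator_alternatingGroup_eq_top (by simpa using h5 q)⟩
  choose ρ hρ using fun q : ι => h q q.2.1 (by have := q.2.2; omega)
  refine propertyRInfinity_of_simple_quotients (fun p q hpq => Subtype.ext ?_)
    (fun q => alternatingGroup_exists_not_twistedConj_one q.2.1 (h5 q)) hρ
  have hcard (q : ι) := two_mul_card_alternatingGroup_fin (q := q) (by have := h5 q; omega)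
  refine (Nat.factorial_inj (by have := h5 p; omega)).mp ?_
  rw [← hcard p, ← hcard q]
  exact congrArg (2 * ·) hpq

end AlternatingGroup

/-! ### Artin groups and wreath products -/

section AlternatingProd

variable {G : Type*} [Group G]

/-- The alternating product `s t s t ⋯` with `m` factors: the word `altWord` evaluated in a
group. -/
def alternatingProd (s t : G) (m : ℕ) : G :=
  ((List.range m).map fun k => if k % 2 = 0 then s else t).prod

theorem alternatingProd_succ (s t : G) (m : ℕ) :
    alternatingProd s t (m + 1) = alternatingProd s t m * if m % 2 = 0 then s else t := by
  simp [alternatingProd, List.range_succ]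

theorem lift_altWord {S : Type*} (f : S → G) (s t : S) (m : ℕ) :
    FreeGroup.lift f (altWord s t m) = alternatingProd (f s) (f t) m := by
  simp only [altWord, alternatingProd, map_list_prod, List.map_map, Function.comp_def,
    apply_ite (FreeGroup.lift f), FreeGroup.lift_apply_of]

theorem alternatingProd_two_mul (s t : G) (j : ℕ) :
    alternatingProd s t (2 * j) = (s * t) ^ j := by
  induction j with
  | zero => simp [alternatingProd]
  | succ j ih =>
    rw [mul_add_one, alternatingProd_succ, alternatingProd_succ, ih,
      if_pos (by omega), if_neg (by omega), pow_succ, mul_assoc]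

theorem alternatingProd_two_mul_add_one (s t : G) (j : ℕ) :
    alternatingProd s t (2 * j + 1) = (s * t) ^ j * s := by
  rw [alternatingProd_succ, alternatingProd_two_mul, if_pos (by omega)]

variable {s t : G}

theorem mul_pow_swap_of_mul_self (hs : s * s = 1) (ht : t * t = 1) (i : ℕ) :
    (t * s) ^ i = ((s * t) ^ i)⁻¹ := by
  rw [← inv_pow, mul_inv_rev, inv_eq_of_mul_eq_one_left hs, inv_eq_of_mul_eq_one_left ht]

theorem mul_mul_pow_inv_of_mul_self (hs : s * s = 1) (ht : t * t = 1) (i : ℕ) :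
    s * ((s * t) ^ i)⁻¹ = (s * t) ^ i * s := by
  rw [← mul_pow_swap_of_mul_self hs ht]
  exact (SemiconjBy.pow_right (a := s) (show s * (t * s) = s * t * s from (mul_assoc ..).symm) i).eq

theorem alternatingProd_conj (hs : s * s = 1) (ht : t * t = 1) (i : ℕ) :
    alternatingProd s t i * (if i % 2 = 0 then s else t) * (alternatingProd s t i)⁻¹ =
      (s * t) ^ i * s := by
  obtain ⟨j, rfl | rfl⟩ := Nat.even_or_odd' i
  · rw [alternatingProd_two_mul, if_pos (by omega), mul_assoc,
      mul_mul_pow_inv_of_mul_self hs ht, ← mul_assoc, ← pow_add, two_mul]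
  · rw [alternatingProd_two_mul_add_one, if_neg (by omega), mul_inv_rev,
      inv_eq_of_mul_eq_one_left hs, mul_assoc, mul_mul_pow_inv_of_mul_self hs ht,
      two_mul, add_assoc, pow_add, pow_succ']
    simp only [mul_assoc]

theorem alternatingProd_comm (hs : s * s = 1) (ht : t * t = 1) {m : ℕ} (hm : (s * t) ^ m = 1) :
    alternatingProd s t m = alternatingProd t s m := by
  obtain ⟨j, rfl | rfl⟩ := Nat.even_or_odd' m
  · rw [alternatingProd_two_mul, alternatingProd_two_mul, mul_pow_swap_of_mul_self hs ht,
      eq_inv_iff_mul_eq_one, ← pow_add, ← two_mul, hm]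
  · rw [alternatingProd_two_mul_add_one, alternatingProd_two_mul_add_one,
      mul_pow_swap_of_mul_self hs ht, eq_inv_mul_iff_mul_eq, ← mul_assoc, ← pow_add, ← two_mul,
      ← mul_left_inj t, mul_assoc, ← pow_succ, hm, ht]

theorem conj_mul_conj_pow_eq_one (hs : s * s = 1) (ht : t * t = 1) {m : ℕ}
    (hm : (s * t) ^ m = 1) (x : G) (i j : ℕ) :
    (x⁻¹ * ((s * t) ^ i * s) * x * (x⁻¹ * ((s * t) ^ j * s) * x)) ^ m = 1 := by
  have hrot : x⁻¹ * ((s * t) ^ i * s) * x * (x⁻¹ * ((s * t) ^ j * s) * x) =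
      x⁻¹ * ((s * t) ^ i * ((s * t) ^ j)⁻¹) * x⁻¹⁻¹ := by
    rw [← mul_mul_pow_inv_of_mul_self hs ht j]
    simp only [mul_assoc, mul_inv_cancel_left, inv_inv]
    rw [← mul_assoc s s, hs, one_mul]
  have hcomm : Commute ((s * t) ^ i) ((s * t) ^ j)⁻¹ :=
    ((Commute.refl (s * t)).pow_pow i j).inv_right
  rw [hrot, conj_pow, hcomm.mul_pow, inv_pow, pow_right_comm, pow_right_comm _ j, hm]
  simp

end AlternatingProd

section ReflectionLift

variable {Q F : Type*} [Group Q] [Group F]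

/-- The lift of an involution `s` of `Q` to `F ≀ᵣ Q` determined by a decoration `g` of the
elements of `Q` by elements of `F`. Think of `s` as crossing, in the chamber at `x`, the wall of
the reflection `x⁻¹ s x`: the lift records the decoration of that wall, so that the base
coordinates of a word are the products of the decorations of the walls that it crosses. -/
def reflectionLift (g : Q → F) (s : Q) : F ≀ᵣ Q :=
  ⟨fun x => g (x⁻¹ * s * x), s⟩

variable {g : Q → F} {s t : Q}

theorem alternatingProd_reflectionLift_right (m : ℕ) :
    (alternatingProd (reflectionLift g s) (reflectionLift g t) m).right =
      alternatingProd s t m := by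
  induction m with
  | zero => simp [alternatingProd]
  | succ m ih =>
    rw [alternatingProd_succ, alternatingProd_succ, RegularWreathProduct.mul_right, ih]
    split_ifs <;> rfl

theorem alternatingProd_reflectionLift_left (hs : s * s = 1) (ht : t * t = 1) (m : ℕ) (x : Q) :
    (alternatingProd (reflectionLift g s) (reflectionLift g t) m).left x =
      ((List.range m).map fun i => g (x⁻¹ * ((s * t) ^ i * s) * x)).prod := by
  induction m with
  | zero => simp [alternatingProd]
  | succ m ih =>
    rw [alternatingProd_succ, RegularWreathProduct.mul_left, Pi.mul_apply, ih, List.range_succ,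
      List.map_append, List.prod_append, List.map_singleton, List.prod_singleton,
      alternatingProd_reflectionLift_right, ← alternatingProd_conj hs ht m]
    split_ifs <;> simp [reflectionLift, mul_assoc]

/-- The two sides of the braid relation cross the same walls, in opposite orders. -/
theorem alternatingProd_reflectionLift_comm (hs : s * s = 1) (ht : t * t = 1) {m : ℕ}
    (hm : (s * t) ^ m = 1)
    (hcomm : ∀ x i j, Commute (g (x⁻¹ * ((s * t) ^ i * s) * x))
      (g (x⁻¹ * ((s * t) ^ j * s) * x))) :
    alternatingProd (reflectionLift g s) (reflectionLift g t) m =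
      alternatingProd (reflectionLift g t) (reflectionLift g s) m := by
  refine RegularWreathProduct.ext (funext fun x => ?_) ?_
  · rw [alternatingProd_reflectionLift_left hs ht, alternatingProd_reflectionLift_left ht hs]
    have hwalls (i : ℕ) (hi : i < m) : (t * s) ^ i * t = (s * t) ^ (m - 1 - i) * s := by
      have hrot : (s * t) ^ (m - 1 - i) * (s * t * (s * t) ^ i) = 1 := by
        rw [← pow_succ', ← pow_add, ← hm]
        congr 1
        omega
      rw [eq_inv_of_mul_eq_one_left hrot, mul_inv_rev, mul_pow_swap_of_mul_self hs ht, mul_inv_rev,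
        inv_eq_of_mul_eq_one_left hs, inv_eq_of_mul_eq_one_left ht, mul_assoc, mul_assoc, hs,
        mul_one]
    have hrev : (List.range m).map (fun i => g (x⁻¹ * ((t * s) ^ i * t) * x)) =
        ((List.range m).map fun i => g (x⁻¹ * ((s * t) ^ i * s) * x)).reverse := by
      refine List.ext_getElem (by simp) fun i hi _ => ?_
      rw [List.length_map, List.length_range] at hi
      simp [hwalls i hi]
    rw [hrev]
    exact (List.reverse_perm _).symm.prod_eq'
      (List.pairwise_map.mpr (List.pairwise_of_forall (hcomm x)))
  · rw [alternatingProd_reflectionLift_right, alternatingProd_reflectionLift_right,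
      alternatingProd_comm hs ht hm]

theorem left_conj_apply_one {p w : F ≀ᵣ Q} (hw : w.right = 1) :
    (p * w * p⁻¹).left 1 = p.left 1 * w.left p.right⁻¹ * (p.left 1)⁻¹ := by
  simp [hw]

theorem reflectionLift_pow_left (hs : s * s = 1) (n : ℕ) (x : Q) :
    (reflectionLift g s ^ n).left x = g (x⁻¹ * s * x) ^ n := by
  have hpow : alternatingProd (reflectionLift g s) (reflectionLift g s) n =
      reflectionLift g s ^ n := by simp [alternatingProd]
  rw [← hpow, alternatingProd_reflectionLift_left hs hs]
  simp [hs]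

theorem reflectionLift_pow_right (n : ℕ) : (reflectionLift g s ^ n).right = s ^ n :=
  map_pow (RegularWreathProduct.rightHom : F ≀ᵣ Q →* Q) (reflectionLift g s) n

end ReflectionLift

section HomKernel

variable (G Q : Type*) [Group G] [Group Q]

/-- The intersection of the kernels of all homomorphisms from `G` to `Q`. -/
def homKernel : Subgroup G := ⨅ f : G →* Q, f.ker

variable {G Q}

theorem mem_homKernel {x : G} : x ∈ homKernel G Q ↔ ∀ f : G →* Q, f x = 1 := by
  simp [homKernel, Subgroup.mem_iInf, MonoidHom.mem_ker]

instance homKernel_characteristic : (homKernel G Q).Characteristic :=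
  Subgroup.characteristic_iff_le_comap.mpr fun φ _ hx =>
    mem_homKernel.mpr fun f => mem_homKernel.mp hx (f.comp φ.toMonoidHom)

instance homKernel_finiteIndex [Group.FG G] [Finite Q] : (homKernel G Q).FiniteIndex :=
  have : Finite (G →* Q) := finite_monoidHom
  Subgroup.finiteIndex_iInf fun _ => inferInstance

theorem pow_card_mem_homKernel (x : G) : x ^ Nat.card Q ∈ homKernel G Q :=
  mem_homKernel.mpr fun f => by rw [map_pow, pow_card_eq_one']

/-- The base coordinate at `1` of a homomorphism to a wreath product, which is multiplicative
where the `Q`-component is trivial. -/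
def baseHom {F : Type*} [Group F] (θ : G →* F ≀ᵣ Q) : homKernel G Q →* F where
  toFun x := (θ x).left 1
  map_one' := by simp
  map_mul' x y := by
    have hx : (θ x).right = 1 := mem_homKernel.mp x.2 (RegularWreathProduct.rightHom.comp θ)
    simp [hx]

end HomKernel

section PairDecoration

variable {Q F : Type*} [DecidableEq Q] [Group F]

/-- The decoration of `u` by `X` and of `v` by `Y`, trivial elsewhere. -/
def pairDecoration (u v : Q) (X Y : F) (z : Q) : F :=
  if z = u then X else if z = v then Y else 1

theorem commute_pairDecoration {u v y z : Q} {X Y : F}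
    (h : ¬(y = u ∧ z = v)) (h' : ¬(y = v ∧ z = u)) :
    Commute (pairDecoration u v X Y y) (pairDecoration u v X Y z) := by
  unfold pairDecoration
  split_ifs <;> simp_all

end PairDecoration

section ArtinGroup

variable {S : Type*} {M : S → S → ℕ} {Q : Type*} [Group Q] {r : S → Q}

instance artinGroup_fg [Finite S] : Group.FG (ArtinGroup M) :=
  Group.fg_of_surjective (f := PresentedGroup.mk (artinRels M))
    (PresentedGroup.mk_surjective (artinRels M))

theorem mem_of_pow_mem_of_coprime {G : Type*} [Group G] {K : Subgroup G} {x : G} {k : ℕ}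
    (hk : k.Coprime (orderOf x)) (hx : x ^ k ∈ K) : x ∈ K := by
  obtain ⟨m, hm⟩ := exists_pow_eq_self_of_coprime hk
  exact hm ▸ K.pow_mem hx m

theorem exists_artinGroup_hom_reflectionLift (hr : ∀ s, r s * r s = 1)
    (hrel : ∀ s t, s ≠ t → 2 ≤ M s t → (r s * r t) ^ M s t = 1)
    {F : Type*} [Group F] {g : Q → F}
    (hcomm : ∀ s t, s ≠ t → 2 ≤ M s t → ∀ x i j,
      Commute (g (x⁻¹ * ((r s * r t) ^ i * r s) * x)) (g (x⁻¹ * ((r s * r t) ^ j * r s) * x))) :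
    ∃ θ : ArtinGroup M →* F ≀ᵣ Q, ∀ s, θ (artinGen M s) = reflectionLift g (r s) := by
  have hθ : ∀ w ∈ artinRels M, FreeGroup.lift (fun s => reflectionLift g (r s)) w = 1 := by
    rintro w ⟨s, t, hst, h2, rfl⟩
    rw [map_mul, map_inv, lift_altWord, lift_altWord, mul_inv_eq_one]
    exact alternatingProd_reflectionLift_comm (hr s) (hr t) (hrel s t hst h2) (hcomm s t hst h2)
  exact ⟨PresentedGroup.toGroup hθ, fun s => PresentedGroup.toGroup.of hθ⟩

/-- As `(u * v) ^ L ≠ 1`, no braid relation crosses both a `u`-wall and a `v`-wall. -/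
theorem exists_artinGroup_hom_pairDecoration [DecidableEq Q] (hr : ∀ s, r s * r s = 1)
    (hrel : ∀ s t, s ≠ t → 2 ≤ M s t → (r s * r t) ^ M s t = 1) {L : ℕ}
    (hL : ∀ s t, s ≠ t → 2 ≤ M s t → M s t ∣ L) {u v : Q} (huv : (u * v) ^ L ≠ 1)
    {F : Type*} [Group F] (X Y : F) :
    ∃ θ : ArtinGroup M →* F ≀ᵣ Q,
      ∀ s, θ (artinGen M s) = reflectionLift (pairDecoration u v X Y) (r s) := by
  have hpow (s t) (hst : s ≠ t) (h2 : 2 ≤ M s t) (x i j) :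
      (x⁻¹ * ((r s * r t) ^ i * r s) * x * (x⁻¹ * ((r s * r t) ^ j * r s) * x)) ^ L = 1 := by
    obtain ⟨d, hd⟩ := hL s t hst h2
    rw [hd, pow_mul, conj_mul_conj_pow_eq_one (hr s) (hr t) (hrel s t hst h2), one_pow]
  exact exists_artinGroup_hom_reflectionLift hr hrel fun s t hst h2 x i j =>
    commute_pairDecoration
      (fun h => huv (by simpa only [h.1, h.2] using hpow s t hst h2 x i j))
      (fun h => huv (by simpa only [h.1, h.2] using hpow s t hst h2 x j i))

theorem exists_homKernel_surjective (hr : ∀ s, r s * r s = 1)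
    (hrel : ∀ s t, s ≠ t → 2 ≤ M s t → (r s * r t) ^ M s t = 1) {L : ℕ}
    (hL : ∀ s t, s ≠ t → 2 ≤ M s t → M s t ∣ L) {a b c : S}
    (hne : (r a * (r b * r c * r b)) ^ L ≠ 1) {F : Type*} [Group F] {X Y : F}
    (hX : (Nat.card Q).Coprime (orderOf X)) (hY : (Nat.card Q).Coprime (orderOf Y))
    (hXY : Subgroup.closure {X, Y} = ⊤) :
    ∃ f : homKernel (ArtinGroup M) Q →* F, Function.Surjective f := by
  classical
  set u := r a
  set v := r b * r c * r b
  obtain ⟨θ, hθ⟩ := exists_artinGroup_hom_pairDecoration hr hrel hL hne X Y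
  have hu : pairDecoration u v X Y u = X := if_pos rfl
  have hv : pairDecoration u v X Y v = Y :=
    (if_neg fun h : v = u => hne (by rw [h, hr, one_pow])).trans (if_pos rfl)
  refine ⟨baseHom θ, MonoidHom.range_eq_top.mp (top_le_iff.mp ?_)⟩
  set k := Nat.card Q
  have hXk : X ^ k ∈ (baseHom θ).range :=
    ⟨⟨artinGen M a ^ k, pow_card_mem_homKernel _⟩, by
      simp [baseHom, hθ, reflectionLift_pow_left (hr a), hu, u]⟩
  have hYk : pairDecoration u v X Y (r b) * Y ^ k * (pairDecoration u v X Y (r b))⁻¹ ∈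
      (baseHom θ).range := by
    refine ⟨⟨artinGen M b * artinGen M c ^ k * (artinGen M b)⁻¹,
      Subgroup.Normal.conj_mem inferInstance _ (pow_card_mem_homKernel _) _⟩, ?_⟩
    have hright : (reflectionLift (pairDecoration u v X Y) (r c) ^ k).right = 1 := by
      rw [reflectionLift_pow_right, pow_card_eq_one']
    change (θ _).left 1 = _
    rw [map_mul, map_mul, map_inv, map_pow, hθ, hθ, left_conj_apply_one hright,
      reflectionLift_pow_left (hr c)]
    simp [reflectionLift, v, hv, inv_eq_of_mul_eq_one_left (hr b)]
  have hXmem : X ∈ (baseHom θ).range := mem_of_pow_mem_of_coprime hX hXk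
  have hYmem : Y ∈ (baseHom θ).range := by
    refine mem_of_pow_mem_of_coprime hY ?_
    unfold pairDecoration at hYk
    split_ifs at hYk
    · exact (Subgroup.mul_mem_cancel_left _ hXmem).mp
        ((Subgroup.mul_mem_cancel_right _ (inv_mem hXmem)).mp hYk)
    · rwa [← conj_pow, mul_inv_cancel_right] at hYk
    · simpa using hYk
  rw [← hXY, Subgroup.closure_le]
  exact Set.pair_subset hXmem hYmem

theorem propertyRInfinity_artinGroup_of_finite [Finite S] [Finite Q] (hr : ∀ s, r s * r s = 1)
    (hrel : ∀ s t, s ≠ t → 2 ≤ M s t → (r s * r t) ^ M s t = 1) {L : ℕ}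
    (hL : ∀ s t, s ≠ t → 2 ≤ M s t → M s t ∣ L) {a b c : S}
    (hne : (r a * (r b * r c * r b)) ^ L ≠ 1) : PropertyRInfinity (ArtinGroup M) := by
  refine .of_characteristic (homKernel (ArtinGroup M) Q) <|
    propertyRInfinity_of_alternatingGroup_quotients (max (Nat.card Q) 2) fun q hq hlt => ?_
  obtain ⟨X, Y, hX, hY, hXY⟩ := exists_orderOf_eq_closure_pair_eq_top hq (by omega)
  have hcop : (Nat.card Q).Coprime q :=
    (Nat.coprime_of_lt_prime Nat.card_pos.ne' (by omega) hq).symm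
  exact exists_homKernel_surjective hr hrel hL hne (by rwa [hX]) (by rwa [hY]) hXY

end ArtinGroup

/-! ### Residual finiteness -/

section ResiduallyFinite

open Group

theorem residuallyFinite_of_injective {G H : Type*} [Group G] [Group H] [ResiduallyFinite H]
    {f : G →* H} (hf : Function.Injective f) : ResiduallyFinite G := by
  refine residuallyFinite_iff_exists_finiteIndexNormalSubgroup.mpr fun g hg => ?_
  obtain ⟨N, hN⟩ := exists_finiteIndexNormalSubgroup_notMem (f g) ((map_ne_one_iff f hf).mpr hg)
  exact ⟨N.comap f, hN⟩

/-- Baumslag's theorem. For finite `P`, automorphisms of `G` permute the finite set `G →* P`. -/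
theorem residuallyFinite_mulAut {G : Type*} [Group G] [Group.FG G] [ResiduallyFinite G] :
    ResiduallyFinite (MulAut G) := by
  refine residuallyFinite_iff_exists_finiteIndex.mpr fun α hα => ?_
  obtain ⟨x, hx⟩ : ∃ x, α x ≠ x := by
    contrapose! hα
    exact MulEquiv.ext hα
  obtain ⟨N, hN⟩ := exists_finiteIndexNormalSubgroup_of_residuallyFinite x (α x) hx.symm
  let P := G ⧸ N.toSubgroup
  have : Finite (G →* P) := finite_monoidHom
  let ρ : MulAut G →* Equiv.Perm (G →* P) := MonoidHom.toHomPerm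
    { toFun β f := f.comp (β⁻¹).toMonoidHom
      map_one' := rfl
      map_mul' _ _ := funext fun f => MonoidHom.ext fun g => congrArg f (by simp) }
  refine ⟨ρ.ker, Subgroup.finiteIndex_ker ρ, fun hmem => hN ?_⟩
  have hfix : (QuotientGroup.mk' N.toSubgroup).comp (α⁻¹).toMonoidHom = QuotientGroup.mk' _ :=
    DFunLike.congr_fun hmem (QuotientGroup.mk' N.toSubgroup)
  simpa using DFunLike.congr_fun hfix (α x)

theorem residuallyFinite_multiplicative {V : Type*} [AddCommGroup V] [Module.Free ℤ V] :
    ResiduallyFinite (Multiplicative V) := by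
  refine residuallyFinite_iff_exists_finiteIndex.mpr fun v hv => ?_
  let e := Module.Free.chooseBasis ℤ V
  obtain ⟨i, hi⟩ : ∃ i, e.repr v.toAdd i ≠ 0 := by
    contrapose! hv
    exact e.repr.map_eq_zero_iff.mp (Finsupp.ext hv)
  set n := e.repr v.toAdd i
  have : NeZero (n.natAbs + 1) := ⟨by omega⟩
  let f : V →+ ZMod (n.natAbs + 1) := (Int.castAddHom _).comp (e.coord i).toAddMonoidHom
  refine ⟨(AddMonoidHom.toMultiplicative f).ker, Subgroup.finiteIndex_ker _, fun hmem => hi ?_⟩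
  have hdvd : ((n.natAbs + 1 : ℕ) : ℤ) ∣ n := (ZMod.intCast_zmod_eq_zero_iff_dvd n _).mp hmem
  exact Int.eq_zero_of_abs_lt_dvd hdvd (by rw [Int.abs_eq_natAbs]; omega)

theorem residuallyFinite_linearEquiv {A V : Type*} [Semiring A] [AddCommGroup V] [Module A V]
    [Module.Free ℤ V] [Module.Finite ℤ V] : ResiduallyFinite (V ≃ₗ[A] V) := by
  have : ResiduallyFinite (Multiplicative V) := residuallyFinite_multiplicative
  have : AddGroup.FG V := Module.Finite.iff_addGroup_fg.mp inferInstance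
  have := residuallyFinite_mulAut (G := Multiplicative V)
  let f : (V ≃ₗ[A] V) →* MulAut (Multiplicative V) :=
    { toFun g := g.toAddEquiv.toMultiplicative
      map_one' := rfl
      map_mul' _ _ := rfl }
  exact residuallyFinite_of_injective (f := f) fun g h hgh =>
    LinearEquiv.ext fun v => DFunLike.congr_fun hgh (Multiplicative.ofAdd v)

end ResiduallyFinite

/-! ### Products of two reflections -/

section Reflections

open Module Polynomial Polynomial.Chebyshev

theorem S_eval_pos {A : Type*} [CommRing A] [LinearOrder A] [IsStrictOrderedRing A] {t : A}
    (ht : 2 ≤ t) (n : ℕ) : 0 < (S A n).eval t := by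
  suffices 0 < (S A n).eval t ∧ (S A n).eval t ≤ (S A (n + 1)).eval t from this.1
  induction n with
  | zero => simpa using one_le_two.trans ht
  | succ n ih =>
    obtain ⟨hpos, hle⟩ := ih
    have hrec : (S A (n + 2)).eval t = t * (S A (n + 1)).eval t - (S A n).eval t := by
      simp [S_add_two]
    push_cast
    rw [add_assoc, one_add_one_eq_two, hrec]
    exact ⟨hpos.trans_le hle, by nlinarith⟩

theorem S_eval_two_mul_cos_eq_zero {θ : ℝ} (hθ : Real.sin θ ≠ 0) {n : ℤ}
    (h : Real.sin ((n + 1) * θ) = 0) : (S ℝ n).eval (2 * Real.cos θ) = 0 :=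
  (mul_eq_zero.mp ((S_two_mul_real_cos θ n).trans h)).resolve_right hθ

theorem S_eval_add_S_eval_two_mul_cos_eq_zero {θ : ℝ} (hθ : Real.sin θ ≠ 0) {n : ℤ}
    (h : (2 * n + 1) * θ = 2 * Real.pi) :
    (S ℝ n).eval (2 * Real.cos θ) + (S ℝ (n - 1)).eval (2 * Real.cos θ) = 0 := by
  refine (mul_eq_zero.mp ?_).resolve_right hθ
  rw [add_mul, S_two_mul_real_cos, S_two_mul_real_cos,
    show ((n : ℝ) + 1) * θ = 2 * Real.pi - n * θ by linarith, Real.sin_two_pi_sub]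
  push_cast
  ring_nf

variable {A V : Type*} [CommRing A] [AddCommGroup V] [Module A V] {x y : V} {f g : Dual A V}

theorem reflection_mul_reflection_sq_eq_one (hf : f x = 2) (hg : g y = 2) (hfy : f y = 0)
    (hgx : g x = 0) : (reflection hf * reflection hg) ^ 2 = 1 := by
  ext z
  simp only [pow_two, LinearEquiv.mul_apply, reflection_apply, map_sub, map_smul, hf, hg, hfy, hgx,
    LinearEquiv.coe_one, id_eq]
  module

theorem reflection_mul_reflection_pow_two_mul_eq_one (hf : f x = 2) (hg : g y = 2) {j : ℕ}
    (h : (S A (j - 1)).eval (f y * g x - 2) = 0) :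
    (reflection hf * reflection hg) ^ (2 * j) = 1 := by
  ext z
  rw [reflection_mul_reflection_pow_apply, show ((2 * j : ℕ) - 2 : ℤ) / 2 = j - 1 by omega,
    show ((2 * j : ℕ) - 1 : ℤ) / 2 = j - 1 by omega]
  simp [h]

theorem reflection_mul_reflection_pow_two_mul_add_one_eq_one (hf : f x = 2) (hg : g y = 2) {j : ℕ}
    (h : (S A j).eval (f y * g x - 2) + (S A (j - 1)).eval (f y * g x - 2) = 0) :
    (reflection hf * reflection hg) ^ (2 * j + 1) = 1 := by
  ext z
  rw [reflection_mul_reflection_pow_apply, show ((2 * j + 1 : ℕ) - 2 : ℤ) / 2 = j - 1 by omega,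
    show ((2 * j + 1 : ℕ) - 1 : ℤ) / 2 = j by omega,
    show ((2 * j + 1 : ℕ) - 3 : ℤ) / 2 = j - 1 by omega,
    show ((2 * j + 1 : ℕ) : ℤ) / 2 = j by omega]
  simp [h]

theorem reflection_mul_reflection_pow_eq_one [Algebra A ℝ] [FaithfulSMul A ℝ]
    (hf : f x = 2) (hg : g y = 2) {m : ℕ} (hm : 3 ≤ m)
    (hcos : algebraMap A ℝ (f y * g x) = (2 * Real.cos (Real.pi / m)) ^ 2) :
    (reflection hf * reflection hg) ^ m = 1 := by
  have hm' : (3 : ℝ) ≤ m := mod_cast hm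
  have hθ : (m : ℝ) * (2 * Real.pi / m) = 2 * Real.pi := by field_simp
  set θ := 2 * Real.pi / m
  have hsin : Real.sin θ ≠ 0 := (Real.sin_pos_of_pos_of_lt_pi (by positivity)
    (by nlinarith [Real.pi_pos])).ne'
  have ht : algebraMap A ℝ (f y * g x - 2) = 2 * Real.cos θ := by
    rw [map_sub, hcos, show θ = 2 * (Real.pi / m) from mul_div_assoc .., Real.cos_two_mul,
      map_ofNat]
    ring
  have hinj := FaithfulSMul.algebraMap_injective A ℝ
  obtain ⟨j, rfl | rfl⟩ := Nat.even_or_odd' m <;> push_cast at hθ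
  · refine reflection_mul_reflection_pow_two_mul_eq_one hf hg (hinj ?_)
    rw [algebraMap_eval_S, ht, map_zero]
    refine S_eval_two_mul_cos_eq_zero hsin ?_
    push_cast
    rw [sub_add_cancel, show (j : ℝ) * θ = Real.pi by linarith, Real.sin_pi]
  · refine reflection_mul_reflection_pow_two_mul_add_one_eq_one hf hg (hinj ?_)
    rw [map_add, algebraMap_eval_S, algebraMap_eval_S, ht, map_zero]
    exact S_eval_add_S_eval_two_mul_cos_eq_zero hsin (mod_cast hθ)

theorem conj_reflection (e : V ≃ₗ[A] V) (hf : f x = 2) :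
    e * reflection hf * e⁻¹ =
      reflection (x := e x) (f := f.comp e.symm.toLinearMap) (by simpa using hf) := by
  ext z
  simp [reflection_apply, LinearEquiv.mul_apply]

theorem not_isOfFinOrder_reflection_mul_reflection [LinearOrder A] [IsStrictOrderedRing A]
    (hf : f x = 2) (hg : g y = 2) (h : 4 ≤ f y * g x) {p : Dual A V} (hpx : p x = 0)
    (hpy : p y ≠ 0) : ¬ IsOfFinOrder (reflection hf * reflection hg) := by
  rw [isOfFinOrder_iff_pow_eq_one]
  rintro ⟨_ | n, hn, hpow⟩
  · exact absurd hn (lt_irrefl 0)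
  have hgx : g x ≠ 0 := by
    intro h0
    norm_num [h0] at h
  have hS : (S A n).eval (f y * g x - 2) ≠ 0 := (S_eval_pos (by linarith) n).ne'
  have hx := congrArg p (reflection_mul_reflection_pow_apply_self hf hg (n + 1))
  rw [hpow] at hx
  simp [hpx, hpy, hgx, hS] at hx

end Reflections

/-! ### The Tits representation -/

section TitsRepresentation

open Module

variable {S : Type*} {M : S → S → ℕ}

theorem propertyRInfinity_artinGroup_of_residuallyFinite [Finite S] {W : Type*} [Group W]
    [Group.ResiduallyFinite W] {r : S → W} (hr : ∀ s, r s * r s = 1)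
    (hrel : ∀ s t, s ≠ t → 2 ≤ M s t → (r s * r t) ^ M s t = 1) {a b c : S}
    (hinf : ¬ IsOfFinOrder (r a * (r b * r c * r b))) : PropertyRInfinity (ArtinGroup M) := by
  have := Fintype.ofFinite S
  let L := ∏ p : S × S, max 1 (M p.1 p.2)
  have hdvd (s t : S) (h2 : 2 ≤ M s t) : M s t ∣ L := by
    simpa [h2, one_le_two.trans h2] using
      Finset.dvd_prod_of_mem (fun p : S × S => max 1 (M p.1 p.2)) (Finset.mem_univ (s, t))
  have hL : 0 < L := Finset.prod_pos fun _ _ => by positivity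
  obtain ⟨N, hN⟩ := Group.exists_finiteIndexNormalSubgroup_notMem ((r a * (r b * r c * r b)) ^ L)
    fun h => hinf (isOfFinOrder_iff_pow_eq_one.mpr ⟨L, hL, h⟩)
  let π := QuotientGroup.mk' N.toSubgroup
  refine propertyRInfinity_artinGroup_of_finite (r := π ∘ r) (L := L) (a := a) (b := b) (c := c)
    (fun s => ?_) (fun s t hst h2 => ?_) (fun s t _ => hdvd s t) fun h => hN ?_
  · simp [← map_mul, hr s]
  · simp [← map_mul, ← map_pow, hrel s t hst h2]
  · exact (QuotientGroup.eq_one_iff _).mp (by simpa [π] using h)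

/-- The ring `ℤ[2 cos (π / M s t) | s, t ∈ S]` over which the Tits representation is defined. -/
def cosRing (M : S → S → ℕ) : Subalgebra ℤ ℝ :=
  Algebra.adjoin ℤ (Set.range fun p : S × S => 2 * Real.cos (Real.pi / M p.1 p.2))

instance [Finite S] : Module.Finite ℤ (cosRing M) :=
  Algebra.finite_adjoin_of_finite_of_isIntegral (Set.finite_range _) <| by
    rintro _ ⟨p, rfl⟩
    simpa [div_eq_inv_mul] using Real.isIntegral_two_mul_cos_rat_mul_pi (M p.1 p.2 : ℚ)⁻¹

/-- Twice the Gram matrix of the Tits form of `M`. For the label `0`, which encodes `∞`, the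
convention `π / 0 = 0` gives the intended entry `-2`. -/
noncomputable def titsMatrix (M : S → S → ℕ) : Matrix S S (cosRing M) := fun s t =>
  -⟨2 * Real.cos (Real.pi / M s t), Algebra.subset_adjoin ⟨(s, t), rfl⟩⟩

theorem coe_titsMatrix (s t : S) :
    (titsMatrix M s t : ℝ) = -(2 * Real.cos (Real.pi / M s t)) := rfl

theorem titsMatrix_comm (hM : IsCoxeterMatrix M) (s t : S) :
    titsMatrix M s t = titsMatrix M t s :=
  Subtype.ext (by rw [coe_titsMatrix, coe_titsMatrix, hM.1])

theorem titsMatrix_self (hM : IsCoxeterMatrix M) (s : S) : titsMatrix M s s = 2 :=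
  Subtype.ext (show _ = (2 : ℝ) by simp [coe_titsMatrix, hM.2.1])

theorem titsMatrix_le_neg_one {s t : S} (h : M s t = 0 ∨ 3 ≤ M s t) : titsMatrix M s t ≤ -1 := by
  rw [← Subtype.coe_le_coe, coe_titsMatrix]
  have hle : Real.pi / M s t ≤ Real.pi / 3 := by
    obtain h | h := h
    · simpa [h] using by positivity
    · gcongr
      exact_mod_cast h
  have hcos := Real.cos_le_cos_of_nonneg_of_le_pi (by positivity)
    (div_le_self Real.pi_pos.le (by norm_num)) hle
  rw [Real.cos_pi_div_three] at hcos
  push_cast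
  linarith

variable [Fintype S] [DecidableEq S]

/-- The coroot of the basis vector at `s`: the functional pairing with it under the Tits form,
scaled to take the value `2` there. -/
noncomputable def titsCoroot (M : S → S → ℕ) (s : S) : Dual (cosRing M) (S → cosRing M) :=
  (LinearMap.proj s).comp (titsMatrix M).mulVecLin

theorem titsCoroot_single (s t : S) : titsCoroot M s (Pi.single t 1) = titsMatrix M s t := by
  simp [titsCoroot]

theorem titsCoroot_single_self (hM : IsCoxeterMatrix M) (s : S) :
    titsCoroot M s (Pi.single s 1) = 2 := by
  rw [titsCoroot_single, titsMatrix_self hM]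

/-- The image of the generator `s` under the Tits representation of the Coxeter group of `M`. -/
noncomputable def titsReflection (hM : IsCoxeterMatrix M) (s : S) :
    (S → cosRing M) ≃ₗ[cosRing M] (S → cosRing M) :=
  reflection (titsCoroot_single_self hM s)

theorem titsReflection_mul_self (hM : IsCoxeterMatrix M) (s : S) :
    titsReflection hM s * titsReflection hM s = 1 :=
  LinearEquiv.ext (involutive_reflection (titsCoroot_single_self hM s))

theorem titsReflection_mul_pow (hM : IsCoxeterMatrix M) {s t : S} (h : 2 ≤ M s t) :
    (titsReflection hM s * titsReflection hM t) ^ M s t = 1 := by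
  obtain h2 | h3 := h.eq_or_lt
  · have hzero (u v : S) (huv : 2 = M u v) : titsCoroot M u (Pi.single v 1) = 0 :=
      Subtype.ext (by simp [titsCoroot_single, coe_titsMatrix, ← huv])
    rw [← h2]
    exact reflection_mul_reflection_sq_eq_one _ _ (hzero s t h2) (hzero t s (h2.trans (hM.1 s t)))
  · refine reflection_mul_reflection_pow_eq_one _ _ h3 ?_
    rw [titsCoroot_single, titsCoroot_single, titsMatrix_comm hM t s, ← sq, map_pow]
    exact neg_sq _

theorem titsReflection_single (hM : IsCoxeterMatrix M) (s t : S) :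
    titsReflection hM s (Pi.single t 1) =
      Pi.single t 1 - titsMatrix M s t • Pi.single s 1 := by
  rw [titsReflection, reflection_apply, titsCoroot_single]

theorem titsCoroot_titsReflection_single (hM : IsCoxeterMatrix M) (s t u : S) :
    titsCoroot M s (titsReflection hM t (Pi.single u 1)) =
      titsMatrix M s u - titsMatrix M s t * titsMatrix M t u := by
  simp only [titsReflection_single, map_sub, map_smul, titsCoroot_single, smul_eq_mul, mul_comm]

theorem titsReflection_conj (hM : IsCoxeterMatrix M) (s t : S) :
    titsReflection hM s * titsReflection hM t * titsReflection hM s =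
      reflection (x := titsReflection hM s (Pi.single t 1))
        (f := (titsCoroot M t).comp (titsReflection hM s).toLinearMap)
        ((congrArg (titsCoroot M t) (LinearEquiv.symm_apply_apply (titsReflection hM s) _)).trans
          (titsCoroot_single_self hM t)) :=
  conj_reflection (titsReflection hM s) (titsCoroot_single_self hM t)

theorem not_isOfFinOrder_titsReflection_mul (hM : IsCoxeterMatrix M) {a b c : S}
    (hab : M a b = 0 ∨ 3 ≤ M a b) (hac : M a c = 0 ∨ 3 ≤ M a c) (hbc : M b c = 0 ∨ 3 ≤ M b c) :
    ¬ IsOfFinOrder (titsReflection hM a *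
      (titsReflection hM b * titsReflection hM c * titsReflection hM b)) := by
  have hac' : a ≠ c := by
    rintro rfl
    simp [hM.2.1] at hac
  have hbc' : b ≠ c := by
    rintro rfl
    simp [hM.2.1] at hbc
  have hle : titsMatrix M a c - titsMatrix M a b * titsMatrix M b c ≤ -2 := by
    nlinarith [titsMatrix_le_neg_one hab, titsMatrix_le_neg_one hac, titsMatrix_le_neg_one hbc]
  rw [titsReflection_conj]
  refine not_isOfFinOrder_reflection_mul_reflection _ _ ?_ (p := LinearMap.proj c) ?_ ?_
  · rw [LinearMap.comp_apply, LinearEquiv.coe_coe, titsCoroot_titsReflection_single,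
      titsCoroot_titsReflection_single, titsMatrix_comm hM c a, titsMatrix_comm hM c b,
      titsMatrix_comm hM b a, mul_comm (titsMatrix M b c)]
    nlinarith
  · simp [hac']
  · simp [titsReflection_single, hbc']

end TitsRepresentation

theorem xxxlType_twistless_propertyRInfinity_general {S : Type*} [Finite S] (M : S → S → ℕ)
    (hM : IsCoxeterMatrix M) {a b c : S} (hab : M a b = 0 ∨ 3 ≤ M a b)
    (hac : M a c = 0 ∨ 3 ≤ M a c) (hbc : M b c = 0 ∨ 3 ≤ M b c) :
    PropertyRInfinity (ArtinGroup M) := by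
  classical
  have := Fintype.ofFinite S
  have : Group.ResiduallyFinite ((S → cosRing M) ≃ₗ[cosRing M] (S → cosRing M)) :=
    residuallyFinite_linearEquiv
  exact propertyRInfinity_artinGroup_of_residuallyFinite (titsReflection_mul_self hM)
    (fun s t _ => titsReflection_mul_pow hM) (not_isOfFinOrder_titsReflection_mul hM hab hac hbc)

/-- An Artin group of XXXL type (all finite labels at least `6`, at least 3 generators)
whose presentation graph is twistless has property `R_∞`. -/
theorem xxxlType_twistless_propertyRInfinity
    {S : Type*} [Fintype S] (hcard : 3 ≤ Fintype.card S)
    (M : S → S → ℕ) (hM : IsCoxeterMatrix M)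
    (hxxxl : ∀ s t : S, s ≠ t → M s t = 0 ∨ 6 ≤ M s t)
    (htw : Twistless (presGraph M)) :
    PropertyRInfinity (ArtinGroup M) := by
  obtain ⟨a, b, c, hab, hac, hbc⟩ := Fintype.two_lt_card_iff.mp hcard
  exact xxxlType_twistless_propertyRInfinity_general M hM
    ((hxxxl a b hab).imp_right (by omega)) ((hxxxl a c hac).imp_right (by omega))
    ((hxxxl b c hbc).imp_right (by omega))
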